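/- Let X be a scheme which is partially proper over a noetherian scheme. Then X is a locally finite union of quasi-compact closed subsets: the family of closures Z_η of minimal points η of X consists of quasi-compact closed sets covering X, and every quasi-compact open subset of X meets only finitely many of the Z_η. -/

import Mathlib

open AlgebraicGeometry CategoryTheory

universe u

/-- A morphism of schemes is *universally specializing* if every base change of it is a
specializing map on underlying topological spaces. -/
def UniversallySpecializing : MorphismProperty Scheme.{u} :=
  (AlgebraicGeometry.topologically fun f => SpecializingMap f).universally

/-- A morphism of schemes is *partially proper* if it is separated, locally of finite type
and universally specializing. -/
def PartiallyProper {X Y : Scheme.{u}} (f : X ⟶ Y) : Prop :=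
  IsSeparated f ∧ LocallyOfFiniteType f ∧ UniversallySpecializing f

/-- A *minimal point* of a topological space is a point with no proper generization, i.e.
the generic point of an irreducible component. -/
def IsMinimalPoint {T : Type*} [TopologicalSpace T] (η : T) : Prop :=
  ∀ x : T, η ∈ closure {x} → x = η

/-
Fix `η : X` with residue field `K`. The valuative criteria give every valuation ring of `K` that
has a center on `S` a center on `X`, and this center is unique over an affine open of `S`; every
specialization of `η` is the center of some valuation ring. Hence an ultrafilter on `closure {η}`
lifts to an ultrafilter of valuation rings of `K`. The limit of the latter is again a valuation
ring, and as `f` is locally of finite type the original ultrafilter converges to its center. So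
`closure {η}` is quasi-compact.
-/

open TopologicalSpace Filter Topology

section MinimalPoints

variable {T : Type*} [TopologicalSpace T] {η : T}

theorem IsMinimalPoint.mem_genericPoints [QuasiSober T] (hη : IsMinimalPoint η) :
    η ∈ genericPoints T := by
  let ξ := genericPoints.ofComponent
    ⟨irreducibleComponent η, irreducibleComponent_mem_irreducibleComponents η⟩
  have hξ : closure {ξ.1} = irreducibleComponent η := genericPoints.isGenericPoint_ofComponent _
  have hξη : ξ.1 = η := hη ξ (hξ ▸ mem_irreducibleComponent)
  exact hξη ▸ ξ.2

theorem isMinimalPoint_of_mem_genericPoints [T0Space T] (hη : η ∈ genericPoints T) :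
    IsMinimalPoint η := fun x hx ↦ by
  have hxη : x ⤳ η := specializes_iff_mem_closure.2 hx
  have hηx : η ⤳ x := specializes_iff_closure_subset.2
    (hη.2 isIrreducible_singleton.closure (specializes_iff_closure_subset.1 hxη))
  exact (hxη.antisymm hηx).eq

theorem exists_isMinimalPoint_mem_closure [QuasiSober T] [T0Space T] (x : T) :
    ∃ η : T, IsMinimalPoint η ∧ x ∈ closure {η} := by
  let ξ := genericPoints.ofComponent
    ⟨irreducibleComponent x, irreducibleComponent_mem_irreducibleComponents x⟩
  have hξ : closure {ξ.1} = irreducibleComponent x := genericPoints.isGenericPoint_ofComponent _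
  exact ⟨ξ, isMinimalPoint_of_mem_genericPoints ξ.2, hξ ▸ mem_irreducibleComponent⟩

theorem finite_isMinimalPoint_closure_inter_nonempty [QuasiSober T] {U : Set T} (hU : IsOpen U)
    [NoetherianSpace U] : {η : T | IsMinimalPoint η ∧ (closure {η} ∩ U).Nonempty}.Finite := by
  let trace (η : T) : Set U := Subtype.val ⁻¹' closure {η}
  have mem_of_meets {η : T} (h : (closure {η} ∩ U).Nonempty) : η ∈ U :=
    let ⟨_, hx, hxU⟩ := h
    (specializes_iff_mem_closure.2 hx).mem_open hU hxU
  refine .of_finite_image (f := trace) (NoetherianSpace.finite_irreducibleComponents.subset ?_) ?_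
  · rintro _ ⟨η, ⟨hη, hηU⟩, rfl⟩
    exact preimage_mem_irreducibleComponents hη.mem_genericPoints hU.isOpenEmbedding_subtypeVal
      (by rwa [Subtype.range_coe])
  · rintro η - η' ⟨hη', hη'U⟩ htrace
    have hmem : (⟨η', mem_of_meets hη'U⟩ : U) ∈ trace η := htrace ▸ subset_closure rfl
    exact hη' η hmem

end MinimalPoints

section Ultralimit

variable {α : Type*}

/-- The limit of a family of valuation subrings of `K` along an ultrafilter: the elements of `K`
lying in almost all members of the family. It is the limit for the constructible topology on the
Zariski–Riemann space of `K`, and expresses the compactness of that space. -/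
def valuationSubringUltralimit {K : Type*} [Field K] (G : Ultrafilter α)
    (V : α → ValuationSubring K) : ValuationSubring K where
  carrier := {b | ∀ᶠ a in G, b ∈ V a}
  mul_mem' hb hc := hb.mp (hc.mono fun _ hc hb ↦ mul_mem hb hc)
  one_mem' := .of_forall fun _ ↦ one_mem _
  add_mem' hb hc := hb.mp (hc.mono fun _ hc hb ↦ add_mem hb hc)
  zero_mem' := .of_forall fun _ ↦ zero_mem _
  neg_mem' hb := hb.mono fun _ ↦ neg_mem
  mem_or_inv_mem' b := Ultrafilter.eventually_or.1 (.of_forall fun a ↦ (V a).mem_or_inv_mem b)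

theorem range_le_valuationSubringUltralimit {A K : Type*} [Ring A] [Field K] {G : Ultrafilter α}
    {V : α → ValuationSubring K} {φ : A →+* K} (h : ∀ᶠ a in G, φ.range ≤ (V a).toSubring) :
    φ.range ≤ (valuationSubringUltralimit G V).toSubring := by
  rintro _ ⟨b, rfl⟩
  exact h.mono fun _ ha ↦ ha ⟨b, rfl⟩

theorem eventually_range_le_of_finiteType {A B C : Type*} [CommRing A] [CommRing B] [Ring C]
    {g : A →+* B} (hg : g.FiniteType) {φ : B →+* C} {G : Filter α} {V : α → Subring C}
    (hA : ∀ᶠ a in G, (φ.comp g).range ≤ V a) (hB : ∀ b, ∀ᶠ a in G, φ b ∈ V a) :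
    ∀ᶠ a in G, φ.range ≤ V a := by
  algebraize [g]
  obtain ⟨s, hs⟩ := Algebra.FiniteType.out (R := A) (A := B)
  have hgens : ∀ᶠ a in G, ∀ b ∈ s, φ b ∈ V a := (eventually_all_finset s).2 fun b _ ↦ hB b
  filter_upwards [hA, hgens] with a hAa hsa
  rintro _ ⟨b, rfl⟩
  have hb : b ∈ Algebra.adjoin A (s : Set B) := hs ▸ Algebra.mem_top
  induction hb using Algebra.adjoin_induction with
  | mem b hb => exact hsa b hb
  | algebraMap r => exact hAa ⟨r, rfl⟩
  | add b c _ _ hb hc => rw [map_add]; exact add_mem hb hc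
  | mul b c _ _ hb hc => rw [map_mul]; exact mul_mem hb hc

end Ultralimit

section Centers

variable {X S : Scheme.{u}} {K : Type u} [Field K]

/-- The closed point of the spectrum of a local ring, typed as a point of the scheme `Spec R` rather
than of `PrimeSpectrum R` so that morphisms of schemes apply to it syntactically. -/
noncomputable abbrev specClosedPoint (R : CommRingCat.{u}) [IsLocalRing R] : Spec R :=
  IsLocalRing.closedPoint R

theorem specializes_specClosedPoint {R : CommRingCat.{u}} [IsLocalRing R] (p : Spec R) :
    p ⤳ specClosedPoint R :=
  IsLocalRing.specializes_closedPoint (R := R) p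

theorem exists_specMap_comp_fromSpec_eq {U : X.Opens} (hU : IsAffineOpen U)
    {R : CommRingCat.{u}} [IsLocalRing R] (g : Spec R ⟶ X) (hg : g (specClosedPoint R) ∈ U) :
    ∃ ψ : Γ(X, U) ⟶ R, Spec.map ψ ≫ hU.fromSpec = g := by
  have hrange : Set.range g ⊆ Set.range hU.fromSpec := by
    rw [hU.range_fromSpec]
    rintro _ ⟨p, rfl⟩
    exact ((specializes_specClosedPoint p).map g.continuous).mem_open U.2 hg
  refine ⟨Spec.preimage (IsOpenImmersion.lift hU.fromSpec g hrange), ?_⟩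
  rw [Spec.map_preimage, IsOpenImmersion.lift_fac]

/-- The inclusion of the generic point into the spectrum of a valuation ring of `K`. -/
noncomputable abbrev specGenericPoint (V : ValuationSubring K) :
    Spec (.of K) ⟶ Spec (.of V) :=
  Spec.map (CommRingCat.ofHom (algebraMap V K))

theorem eq_of_specGenericPoint_comp_eq {W : S.Opens} (hW : IsAffineOpen W)
    {V : ValuationSubring K} {g₁ g₂ : Spec (.of V) ⟶ S} (h₁ : g₁ (specClosedPoint (.of V)) ∈ W)
    (h₂ : g₂ (specClosedPoint (.of V)) ∈ W)
    (h : specGenericPoint V ≫ g₁ = specGenericPoint V ≫ g₂) : g₁ = g₂ := by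
  obtain ⟨ψ₁, rfl⟩ := exists_specMap_comp_fromSpec_eq hW g₁ h₁
  obtain ⟨ψ₂, rfl⟩ := exists_specMap_comp_fromSpec_eq hW g₂ h₂
  simp only [← Category.assoc, cancel_mono, ← Spec.map_comp] at h
  have hψ := Spec.map_injective h
  congr 2
  ext b
  exact congrArg (fun φ ↦ φ.hom b) hψ

/-- A valuation ring `V` of `K` has center `x` along a `K`-point `i` of `X` if `i` extends to a
morphism `Spec V ⟶ X` sending the closed point to `x`. -/
def HasCenter (i : Spec (.of K) ⟶ X) (V : ValuationSubring K) (x : X) : Prop :=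
  ∃ l : Spec (.of V) ⟶ X, specGenericPoint V ≫ l = i ∧ l (specClosedPoint (.of V)) = x

variable {i : Spec (.of K) ⟶ X} {V : ValuationSubring K} {x y : X}

theorem HasCenter.specializes (h : HasCenter i V x) : i (specClosedPoint (.of K)) ⤳ x := by
  obtain ⟨l, rfl, rfl⟩ := h
  rw [Scheme.Hom.comp_apply]
  exact (specializes_specClosedPoint _).map l.continuous

theorem HasCenter.comp (h : HasCenter i V x) (f : X ⟶ S) : HasCenter (i ≫ f) V (f x) := by
  obtain ⟨l, rfl, rfl⟩ := h
  exact ⟨l ≫ f, by rw [Category.assoc], by rw [Scheme.Hom.comp_apply]⟩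

theorem exists_hasCenter_of_specializes (h : i (specClosedPoint (.of K)) ⤳ x) :
    ∃ V : ValuationSubring K, HasCenter i V x := by
  let α : X.presheaf.stalk x ⟶ .of K :=
    X.presheaf.stalkSpecializes h ≫ Scheme.stalkClosedPointTo i
  obtain ⟨V, hV, hlocal⟩ := IsLocalRing.exists_factor_valuationRing α.hom
  let β : X.presheaf.stalk x ⟶ .of V := CommRingCat.ofHom (α.hom.codRestrict V.toSubring hV)
  have hβα : β ≫ CommRingCat.ofHom (algebraMap V K) =
      X.presheaf.stalkSpecializes h ≫ Scheme.stalkClosedPointTo i := rfl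
  refine ⟨V, Spec.map β ≫ X.fromSpecStalk x, ?_, ?_⟩
  · rw [← Spec.map_comp_assoc, hβα, Spec.map_comp_assoc,
      Scheme.SpecMap_stalkSpecializes_fromSpecStalk, Scheme.Spec_stalkClosedPointTo_fromSpecStalk]
  · have hclosed : Spec.map β (specClosedPoint (.of V)) = specClosedPoint (X.presheaf.stalk x) :=
      IsLocalRing.comap_closedPoint (S := V) β.hom
    rw [Scheme.Hom.comp_apply, hclosed]
    exact X.fromSpecStalk_closedPoint

theorem exists_hasCenter_of_hasCenter_comp {f : X ⟶ S} (hf : ValuativeCriterion.Existence f)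
    {s : S} (h : HasCenter (i ≫ f) V s) : ∃ x, HasCenter i V x ∧ f x = s := by
  obtain ⟨l, hl, rfl⟩ := h
  have sq : CommSq i (specGenericPoint V) f l := ⟨hl.symm⟩
  obtain ⟨l', hl', hl'f⟩ : ∃ l', specGenericPoint V ≫ l' = i ∧ l' ≫ f = l :=
    (hf { R := V, K := K, commSq := sq, .. }).exists_lift.elim
      fun a ↦ ⟨a.l, a.fac_left, a.fac_right⟩
  exact ⟨l' (specClosedPoint (.of V)), ⟨l', hl', rfl⟩, by rw [← hl'f, Scheme.Hom.comp_apply]⟩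

theorem HasCenter.eq_of_isSeparated (f : X ⟶ S) [IsSeparated f] {W : S.Opens}
    (hW : IsAffineOpen W) (hx : HasCenter i V x) (hy : HasCenter i V y) (hxW : f x ∈ W)
    (hyW : f y ∈ W) : x = y := by
  obtain ⟨l, hl, rfl⟩ := hx
  obtain ⟨l', hl', rfl⟩ := hy
  have hlf : l ≫ f = l' ≫ f :=
    eq_of_specGenericPoint_comp_eq hW (by rwa [Scheme.Hom.comp_apply])
      (by rwa [Scheme.Hom.comp_apply]) (by rw [← Category.assoc, ← Category.assoc, hl, hl'])
  have sq : CommSq i (specGenericPoint V) f (l' ≫ f) := ⟨by rw [← hl', Category.assoc]⟩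
  have : Subsingleton sq.LiftStruct :=
    IsSeparated.valuativeCriterion f { R := V, K := K, commSq := sq, .. }
  have hll' : l = l' := congrArg CommSq.LiftStruct.l
    (Subsingleton.elim (⟨l, hl, hlf⟩ : sq.LiftStruct) ⟨l', hl', rfl⟩)
  rw [hll']

theorem exists_hasCenter_mem_affine_iff {U : X.Opens} (hU : IsAffineOpen U)
    {φ : Γ(X, U) ⟶ .of K} (hφ : Spec.map φ ≫ hU.fromSpec = i) :
    (∃ x ∈ U, HasCenter i V x) ↔ φ.hom.range ≤ V.toSubring := by
  constructor
  · rintro ⟨_, hxU, l, hl, rfl⟩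
    obtain ⟨θ, rfl⟩ := exists_specMap_comp_fromSpec_eq hU l hxU
    rw [← hφ, ← Spec.map_comp_assoc, cancel_mono] at hl
    rw [← Spec.map_injective hl]
    rintro _ ⟨b, rfl⟩
    exact (θ.hom b).2
  · intro h
    let θ : Γ(X, U) ⟶ .of V :=
      CommRingCat.ofHom (φ.hom.codRestrict V.toSubring fun b ↦ h ⟨b, rfl⟩)
    have hθ : θ ≫ CommRingCat.ofHom (algebraMap V K) = φ := rfl
    refine ⟨_, ?_, Spec.map θ ≫ hU.fromSpec, ?_, rfl⟩
    · rw [Scheme.Hom.comp_apply, ← SetLike.mem_coe, ← hU.range_fromSpec]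
      exact Set.mem_range_self _
    · rw [← Spec.map_comp_assoc, hθ, hφ]

section Limits

variable {α : Type*} {G : Ultrafilter α} {V : α → ValuationSubring K}

theorem exists_hasCenter_ultralimit {c : α → X} (hc : ∀ᶠ a in G, HasCenter i (V a) (c a))
    {U : X.Opens} (hU : IsAffineOpen U) (hcU : ∀ᶠ a in G, c a ∈ U) :
    ∃ x ∈ U, HasCenter i (valuationSubringUltralimit G V) x := by
  obtain ⟨a, ha, haU⟩ := (hc.and hcU).exists
  obtain ⟨φ, hφ⟩ := exists_specMap_comp_fromSpec_eq hU i
    (ha.specializes.mem_open U.2 haU)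
  rw [exists_hasCenter_mem_affine_iff hU hφ]
  apply range_le_valuationSubringUltralimit
  filter_upwards [hc, hcU] with a ha haU
  exact (exists_hasCenter_mem_affine_iff hU hφ).1 ⟨c a, haU, ha⟩

theorem eventually_exists_hasCenter_mem_affine (f : X ⟶ S) [LocallyOfFiniteType f]
    {W : S.Opens} (hW : IsAffineOpen W) {U : X.Opens} (hU : IsAffineOpen U) (hUW : U ≤ f ⁻¹ᵁ W)
    (hV : ∀ᶠ a in G, ∃ s ∈ W, HasCenter (i ≫ f) (V a) s) (hxU : x ∈ U)
    (hx : HasCenter i (valuationSubringUltralimit G V) x) :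
    ∀ᶠ a in G, ∃ y ∈ U, HasCenter i (V a) y := by
  obtain ⟨φ, hφ⟩ := exists_specMap_comp_fromSpec_eq hU i
    (hx.specializes.mem_open U.2 hxU)
  have hφW : Spec.map (f.appLE W U hUW ≫ φ) ≫ hW.fromSpec = i ≫ f := by
    rw [Spec.map_comp_assoc, hW.SpecMap_appLE_fromSpec f hU, ← Category.assoc, hφ]
  simp only [exists_hasCenter_mem_affine_iff hW hφW] at hV
  simp only [exists_hasCenter_mem_affine_iff hU hφ]
  have hlimit := (exists_hasCenter_mem_affine_iff hU hφ).1 ⟨x, hxU, hx⟩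
  exact eventually_range_le_of_finiteType (f.finiteType_appLE hW hU hUW) hV
    fun b ↦ hlimit ⟨b, rfl⟩

theorem tendsto_hasCenter_ultralimit (f : X ⟶ S) [IsSeparated f] [LocallyOfFiniteType f]
    {c : α → X} (hc : ∀ᶠ a in G, HasCenter i (V a) (c a)) {W : S.Opens} (hW : IsAffineOpen W)
    (hcW : ∀ᶠ a in G, f (c a) ∈ W) (hx : HasCenter i (valuationSubringUltralimit G V) x)
    (hxW : f x ∈ W) : Tendsto c G (𝓝 x) := by
  refine tendsto_nhds.2 fun O hO hxO ↦ ?_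
  obtain ⟨_, ⟨U, hU, rfl⟩, hxU, hUO⟩ := X.isBasis_affineOpens.exists_subset_of_mem_open
    (show x ∈ O ∩ f ⁻¹ᵁ W from ⟨hxO, hxW⟩) (hO.inter (f ⁻¹ᵁ W).2)
  have hUW : U ≤ f ⁻¹ᵁ W := fun _ hy ↦ (hUO hy).2
  have hcenterW : ∀ᶠ a in G, ∃ s ∈ W, HasCenter (i ≫ f) (V a) s := by
    filter_upwards [hc, hcW] with a ha haW using ⟨f (c a), haW, ha.comp f⟩
  filter_upwards [hc, hcW, eventually_exists_hasCenter_mem_affine f hW hU hUW hcenterW hxU hx]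
    with a ha haW ⟨y, hyU, hy⟩
  have hay : c a = y := ha.eq_of_isSeparated f hW hy haW (hUW hyU)
  exact (hUO (hay ▸ hyU)).1

end Limits

end Centers

theorem isCompact_closure_singleton_of_existence {X S : Scheme.{u}} (f : X ⟶ S) [IsSeparated f]
    [LocallyOfFiniteType f] (hf : ValuativeCriterion.Existence f) [CompactSpace S] (η : X) :
    IsCompact (closure {η}) := by
  let i : Spec (.of (X.residueField η)) ⟶ X := X.fromSpecResidueField η
  have hi : i (specClosedPoint (.of (X.residueField η))) = η :=
    Scheme.fromSpecResidueField_apply η _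
  have hcenter (x : X) : ∃ V : ValuationSubring (X.residueField η), η ⤳ x → HasCenter i V x := by
    by_cases h : η ⤳ x
    · exact (exists_hasCenter_of_specializes (hi.symm ▸ h)).imp fun _ hV _ ↦ hV
    · exact ⟨⊤, fun h' ↦ (h h').elim⟩
  choose V hV using hcenter
  refine isCompact_iff_ultrafilter_le_nhds.2 fun G hG ↦ ?_
  have hVG : ∀ᶠ x in G, HasCenter i (V x) x :=
    Eventually.mono (le_principal_iff.1 hG) fun x hx ↦ hV x (specializes_iff_mem_closure.2 hx)
  obtain ⟨s, -, hs⟩ := isCompact_univ.ultrafilter_le_nhds (G.map f) (by simp)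
  obtain ⟨_, ⟨W, hW, rfl⟩, hsW, -⟩ :=
    S.isBasis_affineOpens.exists_subset_of_mem_open (Set.mem_univ s) isOpen_univ
  have hGW : ∀ᶠ x in G, f x ∈ W := hs (W.2.mem_nhds hsW)
  obtain ⟨_, hzW, hfz⟩ :=
    exists_hasCenter_ultralimit (hVG.mono fun _ hx ↦ hx.comp f) hW hGW
  obtain ⟨z, hz, rfl⟩ := exists_hasCenter_of_hasCenter_comp hf hfz
  exact ⟨z, specializes_iff_mem_closure.1 (hi ▸ hz.specializes),
    tendsto_hasCenter_ultralimit f hVG hW hGW hz hzW⟩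

theorem noetherianSpace_of_isOpen_of_isCompact {X : Scheme.{u}} [IsLocallyNoetherian X]
    {U : Set X} (hU : IsOpen U) (hUc : IsCompact U) : NoetherianSpace U := by
  let U' : X.Opens := ⟨U, hU⟩
  have : CompactSpace U' := isCompact_iff_compactSpace.1 hUc
  have : IsNoetherian U' := {}
  exact inferInstanceAs (NoetherianSpace U')

theorem locally_finite_union_of_qc_closed_of_partiallyProper_general
    {X S : Scheme.{u}} (f : X ⟶ S) (hf : PartiallyProper f) [CompactSpace S]
    [IsLocallyNoetherian X] :
    (∀ η : X, IsCompact (closure {η})) ∧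
    (∀ x : X, ∃ η : X, IsMinimalPoint η ∧ x ∈ closure {η}) ∧
    (∀ U : Set X, IsOpen U → IsCompact U →
      {η : X | IsMinimalPoint η ∧ (closure {η} ∩ U).Nonempty}.Finite) := by
  obtain ⟨_, _, hspec⟩ := hf
  refine ⟨isCompact_closure_singleton_of_existence f (.of_specializingMap f hspec),
    exists_isMinimalPoint_mem_closure, fun U hU hUc ↦ ?_⟩
  have := noetherianSpace_of_isOpen_of_isCompact hU hUc
  exact finite_isMinimalPoint_closure_inter_nonempty hU

/-- Let `X` be a scheme which is partially proper over a noetherian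
scheme.  Then `X` is a locally finite union of quasi-compact closed subsets: the closures
`Z_η` of the minimal points `η` of `X` are quasi-compact closed sets covering `X`, and
every quasi-compact open subset of `X` meets only finitely many of the `Z_η`. -/
theorem locally_finite_union_of_qc_closed_of_partiallyProper
    {X S : Scheme.{u}} (f : X ⟶ S) (hf : PartiallyProper f) [IsNoetherian S] :
    (∀ η : X, IsMinimalPoint η → IsCompact (closure {η})) ∧
    (∀ x : X, ∃ η : X, IsMinimalPoint η ∧ x ∈ closure {η}) ∧
    (∀ U : Set X, IsOpen U → IsCompact U →
      {η : X | IsMinimalPoint η ∧ (closure {η} ∩ U).Nonempty}.Finite) := by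
  have : LocallyOfFiniteType f := hf.2.1
  have : IsLocallyNoetherian X := LocallyOfFiniteType.isLocallyNoetherian f
  exact (locally_finite_union_of_qc_closed_of_partiallyProper_general f hf).imp_left
    fun hcompact η _ ↦ hcompact η
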